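/- Let n ≥ 2 and θ > 0. There exists a constant C > 0 such that for every τ > 0 and every Schwartz function f on ℝⁿ, ‖f̂‖_{L²(Σ(τ))} ≤ C ‖⟨x⟩^{1/2+θ} f‖_{L²(ℝⁿ)}, where the constant C is independent of τ. -/

import Mathlib

open MeasureTheory Real Complex RealInnerProductSpace

noncomputable section

/-- Fourier transform with convention `(2π)^(-n/2) ∫ e^(-ix·ξ) f(x) dx`. -/
def FT (n : ℕ) (f : EuclideanSpace ℝ (Fin n) → ℂ) (ξ : EuclideanSpace ℝ (Fin n)) : ℂ :=
  ((2 * π) ^ (-(n : ℝ) / 2) : ℝ) •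
    ∫ x : EuclideanSpace ℝ (Fin n), Complex.exp (-Complex.I * ((⟪x, ξ⟫ : ℝ) : ℂ)) * f x

/-- Inverse Fourier transform. -/
def IFT (n : ℕ) (F : EuclideanSpace ℝ (Fin n) → ℂ) (x : EuclideanSpace ℝ (Fin n)) : ℂ :=
  ((2 * π) ^ (-(n : ℝ) / 2) : ℝ) •
    ∫ ξ : EuclideanSpace ℝ (Fin n), Complex.exp (Complex.I * ((⟪x, ξ⟫ : ℝ) : ℂ)) * F ξ

/-- Fourier multiplier with symbol `q`: `q(D_x) f = IFT (q · FT f)`. -/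
def mult (n : ℕ) (q : EuclideanSpace ℝ (Fin n) → ℂ) (f : EuclideanSpace ℝ (Fin n) → ℂ) :
    EuclideanSpace ℝ (Fin n) → ℂ :=
  IFT n fun ξ => q ξ * FT n f ξ

/-!
Near any of its points the level set `Σ(1)` is a graph over the kernel `W` of the derivative of `a`
whose points are at most twice as far apart as their projections to `W`, and every dilate of such a
graph is again one, with the same constant. On a graph the surface measure projects to at most a
constant multiple of Lebesgue measure on `W`. Write `x = y + t` with `y ∈ W` and `t ∈ Wᗮ`: the
Fourier transform of `f` at `ξ` is an integral over the line `Wᗮ` of Fourier transforms of slices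
of `f`, evaluated at the projection of `ξ` to `W`. The Cauchy–Schwarz inequality against the weight
`⟨t⟩ ^ (1 + 2θ)`, whose inverse is integrable over the line, followed by Plancherel's theorem on
`W`, bounds the trace on the graph. By compactness finitely many graphs cover `Σ(1)`, and
`Σ(τ) = τ Σ(1)`, so the bound is uniform in `τ`.
-/

open scoped ENNReal NNReal SchwartzMap Topology FourierTransform Pointwise
open Module (finrank)

lemma sq_lintegral_le_lintegral_inv_mul {α : Type*} [MeasurableSpace α] {μ : Measure α}
    {w g : α → ℝ≥0∞} (hw : AEMeasurable w μ) (hw_zero : ∀ t, w t ≠ 0) (hw_top : ∀ t, w t ≠ ∞)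
    (hg : AEMeasurable g μ) :
    (∫⁻ t, g t ∂μ) ^ 2 ≤ (∫⁻ t, (w t)⁻¹ ∂μ) * ∫⁻ t, w t * g t ^ 2 ∂μ := by
  have sq_sqrt (x : ℝ≥0∞) : (x ^ (1 / 2 : ℝ)) ^ 2 = x := by
    rw [← ENNReal.rpow_natCast, ← ENNReal.rpow_mul]
    norm_num
  have factor (t : α) : (w t)⁻¹ ^ (1 / 2 : ℝ) * (w t ^ (1 / 2 : ℝ) * g t) = g t := by
    rw [← mul_assoc, ← ENNReal.mul_rpow_of_nonneg _ _ (by norm_num),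
      ENNReal.inv_mul_cancel (hw_zero t) (hw_top t), ENNReal.one_rpow, one_mul]
  have holder := ENNReal.lintegral_mul_le_Lp_mul_Lq μ Real.HolderConjugate.two_two
    (hw.inv.pow_const (1 / 2 : ℝ)) ((hw.pow_const (1 / 2 : ℝ)).mul hg)
  simp only [Pi.mul_apply, Pi.inv_apply, factor, ENNReal.rpow_two, mul_pow, sq_sqrt] at holder
  calc (∫⁻ t, g t ∂μ) ^ 2
      ≤ ((∫⁻ t, (w t)⁻¹ ∂μ) ^ (1 / 2 : ℝ) * (∫⁻ t, w t * g t ^ 2 ∂μ) ^ (1 / 2 : ℝ)) ^ 2 := by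
        gcongr
    _ = (∫⁻ t, (w t)⁻¹ ∂μ) * ∫⁻ t, w t * g t ^ 2 ∂μ := by rw [mul_pow, sq_sqrt, sq_sqrt]

section FourierSlices

variable {E H : Type*} [NormedAddCommGroup E] [InnerProductSpace ℝ E]
  [NormedAddCommGroup H] [InnerProductSpace ℂ H]

/-- The restriction of a Schwartz function to the affine subspace `t + W`, as a Schwartz function
on `W`. -/
def affineSlice (W : Submodule ℝ E) (f : 𝓢(E, H)) (t : E) : 𝓢(W, H) :=
  SchwartzMap.compCLMOfAntilipschitz ℝ (g := fun y : W => (y : E) + t) (K := 1)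
    (W.subtypeL.hasTemperateGrowth.add (.const t))
    (AntilipschitzWith.of_le_mul_dist fun y z => by simp [Subtype.dist_eq]) f

@[simp]
lemma affineSlice_apply (W : Submodule ℝ E) (f : 𝓢(E, H)) (t : E) (y : W) :
    affineSlice W f t y = f (y + t) := rfl

variable [FiniteDimensional ℝ E] [MeasurableSpace E] [BorelSpace E]

lemma measurePreserving_add_orthogonal (W : Submodule ℝ E) :
    MeasurePreserving (fun p : Wᗮ × W => (p.2 : E) + p.1) volume volume := by
  have h := W.orthogonalDecomposition.symm.measurePreserving.comp
    ((WithLp.volume_preserving_toLp W Wᗮ).comp Measure.measurePreserving_swap)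
  convert! h using 2

lemma fourier_eq_integral_fourier_affineSlice (W : Submodule ℝ E) (f : 𝓢(E, H)) (ξ : E) :
    𝓕 f ξ = ∫ t : Wᗮ, 𝐞 (-⟪(t : E), ξ⟫) •
      𝓕 (affineSlice W f t) (W.orthogonalProjectionOnto ξ) := by
  have hmp := measurePreserving_add_orthogonal W
  have hint : Integrable (fun x : E => 𝐞 (-⟪x, ξ⟫) • f x) :=
    (Real.fourierIntegral_convergent_iff ξ).2 f.integrable
  calc 𝓕 f ξ = ∫ x : E, 𝐞 (-⟪x, ξ⟫) • f x := by rw [SchwartzMap.fourier_coe, Real.fourier_eq]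
    _ = ∫ p : Wᗮ × W, 𝐞 (-⟪(p.2 : E) + p.1, ξ⟫) • f (p.2 + p.1) := by
        rw [← hmp.map_eq,
          integral_map hmp.aemeasurable (hmp.map_eq ▸ hint.aestronglyMeasurable)]
    _ = ∫ t : Wᗮ, ∫ y : W, 𝐞 (-⟪(y : E) + t, ξ⟫) • f (y + t) :=
        integral_prod _ (hmp.integrable_comp_of_integrable hint)
    _ = _ := by
        congr with t
        rw [SchwartzMap.fourier_coe, Real.fourier_eq]
        simp only [inner_add_left, neg_add_rev, AddChar.map_add_eq_mul, mul_smul,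
          affineSlice_apply, ← Submodule.inner_orthogonalProjectionOnto_eq_of_mem_left]
        exact integral_smul (𝕜 := ℂ) (G := H) _ _

lemma enorm_fourier_le_lintegral_affineSlice (W : Submodule ℝ E) (f : 𝓢(E, H)) (ξ : E) :
    ‖𝓕 f ξ‖ₑ ≤ ∫⁻ t : Wᗮ, ‖𝓕 (affineSlice W f t) (W.orthogonalProjectionOnto ξ)‖ₑ := by
  rw [fourier_eq_integral_fourier_affineSlice W]
  refine (enorm_integral_le_lintegral_enorm _).trans_eq (lintegral_congr fun t => ?_)
  rw [← ofReal_norm, Circle.norm_smul, ofReal_norm]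

lemma measurable_enorm_fourier_affineSlice (W : Submodule ℝ E) (f : 𝓢(E, H)) :
    Measurable fun p : Wᗮ × W => ‖𝓕 (affineSlice W f p.1) p.2‖ₑ := by
  have hcont : Continuous fun q : (Wᗮ × W) × W =>
      𝐞 (-⟪q.2, q.1.2⟫) • f (q.2 + q.1.1) := by
    fun_prop
  simp only [SchwartzMap.fourier_coe, Real.fourier_eq, affineSlice_apply]
  exact hcont.stronglyMeasurable.integral_prod_right'.enorm

lemma lintegral_enorm_sq_fourier [CompleteSpace H] (f : 𝓢(E, H)) :
    ∫⁻ ξ, ‖𝓕 f ξ‖ₑ ^ 2 = ∫⁻ x, ‖f x‖ₑ ^ 2 := by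
  have eq_ofReal (g : 𝓢(E, H)) : ∫⁻ x, ‖g x‖ₑ ^ 2 = ENNReal.ofReal (∫ x, ‖g x‖ ^ 2) := by
    have hint : Integrable (fun x => ‖g x‖ ^ 2) := (g.memLp 2).integrable_norm_pow two_ne_zero
    rw [ofReal_integral_eq_lintegral_ofReal hint (.of_forall fun x => by positivity)]
    simp only [ENNReal.ofReal_pow (norm_nonneg _), ofReal_norm]
  rw [eq_ofReal, eq_ofReal, SchwartzMap.integral_norm_sq_fourier]

lemma lintegral_mul_enorm_sq_fourier_affineSlice [CompleteSpace H] (W : Submodule ℝ E)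
    {w : Wᗮ → ℝ≥0∞} (hw : Measurable w) (f : 𝓢(E, H)) :
    ∫⁻ t : Wᗮ, ∫⁻ η : W, w t * ‖𝓕 (affineSlice W f t) η‖ₑ ^ 2 =
      ∫⁻ x, w (Wᗮ.orthogonalProjectionOnto x) * ‖f x‖ₑ ^ 2 := by
  have hmp := measurePreserving_add_orthogonal W
  have hmeas : Measurable fun x => w (Wᗮ.orthogonalProjectionOnto x) * ‖f x‖ₑ ^ 2 :=
    (hw.comp (by fun_prop)).mul (f.continuous.enorm.measurable.pow_const 2)
  calc ∫⁻ t : Wᗮ, ∫⁻ η : W, w t * ‖𝓕 (affineSlice W f t) η‖ₑ ^ 2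
      = ∫⁻ t : Wᗮ, ∫⁻ y : W, w t * ‖f (y + t)‖ₑ ^ 2 := by
        refine lintegral_congr fun t => ?_
        rw [lintegral_const_mul _ ((SchwartzMap.continuous _).enorm.measurable.pow_const 2),
          lintegral_enorm_sq_fourier,
          ← lintegral_const_mul _ ((SchwartzMap.continuous _).enorm.measurable.pow_const 2)]
        rfl
    _ = ∫⁻ p : Wᗮ × W, w (Wᗮ.orthogonalProjectionOnto (p.2 + p.1)) * ‖f (p.2 + p.1)‖ₑ ^ 2 := by
        refine Eq.trans ?_ (lintegral_prod _ (hmeas.comp hmp.measurable).aemeasurable).symm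
        simp [Submodule.orthogonalProjectionOnto_orthogonal_apply_eq_zero]
    _ = _ := hmp.lintegral_comp hmeas

lemma lintegral_enorm_sq_fourier_le_of_map_le [CompleteSpace H] {W : Submodule ℝ E}
    {ν : Measure E} {C : ℝ≥0∞} (hν : ν.map W.orthogonalProjectionOnto ≤ C • volume)
    {w : Wᗮ → ℝ≥0∞} (hw : Measurable w) (hw_zero : ∀ t, w t ≠ 0) (hw_top : ∀ t, w t ≠ ∞)
    (f : 𝓢(E, H)) :
    ∫⁻ ξ, ‖𝓕 f ξ‖ₑ ^ 2 ∂ν ≤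
      (∫⁻ t, (w t)⁻¹) * (C * ∫⁻ x, w (Wᗮ.orthogonalProjectionOnto x) * ‖f x‖ₑ ^ 2) := by
  have hslice := measurable_enorm_fourier_affineSlice W f
  set P := W.orthogonalProjectionOnto
  have hmeas : Measurable fun p : W × Wᗮ => w p.2 * ‖𝓕 (affineSlice W f p.2) p.1‖ₑ ^ 2 :=
    (hw.comp measurable_snd).mul ((hslice.comp measurable_swap).pow_const 2)
  calc ∫⁻ ξ, ‖𝓕 f ξ‖ₑ ^ 2 ∂ν
      ≤ ∫⁻ ξ, (∫⁻ t, (w t)⁻¹) * (∫⁻ t : Wᗮ, w t * ‖𝓕 (affineSlice W f t) (P ξ)‖ₑ ^ 2) ∂ν := by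
        refine lintegral_mono fun ξ => ?_
        refine (pow_le_pow_left' (enorm_fourier_le_lintegral_affineSlice W f ξ) 2).trans ?_
        exact sq_lintegral_le_lintegral_inv_mul hw.aemeasurable hw_zero hw_top
          (hslice.comp measurable_prodMk_right).aemeasurable
    _ = (∫⁻ t, (w t)⁻¹) *
          ∫⁻ η : W, (∫⁻ t : Wᗮ, w t * ‖𝓕 (affineSlice W f t) η‖ₑ ^ 2) ∂(ν.map P) := by
        rw [lintegral_map hmeas.lintegral_prod_right' P.continuous.measurable]
        exact lintegral_const_mul _ (hmeas.lintegral_prod_right'.comp P.continuous.measurable)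
    _ ≤ (∫⁻ t, (w t)⁻¹) *
          (C * ∫⁻ η : W, ∫⁻ t : Wᗮ, w t * ‖𝓕 (affineSlice W f t) η‖ₑ ^ 2) := by
        gcongr
        refine (lintegral_mono' hν le_rfl).trans_eq ?_
        rw [lintegral_smul_measure, smul_eq_mul]
    _ = _ := by
        rw [lintegral_lintegral_swap hmeas.aemeasurable,
          lintegral_mul_enorm_sq_fourier_affineSlice W hw]

end FourierSlices

section LipschitzGraphs

lemma map_restrict_hausdorffMeasure_le {X Y : Type*} [EMetricSpace X] [MeasurableSpace X]
    [BorelSpace X] [EMetricSpace Y] [MeasurableSpace Y] [BorelSpace Y] {f : X → Y}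
    (hf : Measurable f) {S : Set X} {K : ℝ≥0} (hS : AntilipschitzWith K (S.domRestrict f)) {d : ℝ}
    (hd : 0 ≤ d) :
    ((μH[d] : Measure X).restrict S).map f ≤ (K : ℝ≥0∞) ^ d • μH[d] := by
  refine Measure.le_iff.2 fun T hT => ?_
  calc ((μH[d] : Measure X).restrict S).map f T = μH[d] (f ⁻¹' T ∩ S) := by
        rw [Measure.map_apply hf hT, Measure.restrict_apply (hf hT)]
    _ = μH[d] (((↑) : S → X) '' (S.domRestrict f ⁻¹' T)) := by
        rw [Set.inter_comm, ← Subtype.image_preimage_coe]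
        rfl
    _ = μH[d] (S.domRestrict f ⁻¹' T) :=
        isometry_subtype_coe.hausdorffMeasure_image (.inl hd) _
    _ ≤ ((K : ℝ≥0∞) ^ d • μH[d]) T := hS.hausdorffMeasure_preimage_le hd T

variable {E : Type*} [NormedAddCommGroup E]

lemma exists_hausdorffMeasure_finrank_eq_smul_volume [InnerProductSpace ℝ E]
    [FiniteDimensional ℝ E] [MeasurableSpace E] [BorelSpace E] :
    ∃ c : ℝ≥0, (μH[finrank ℝ E] : Measure E) = c • volume :=
  ⟨_, Measure.isAddLeftInvariant_eq_smul _ _⟩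

lemma setLIntegral_smul_hausdorffMeasure [NormedSpace ℝ E] [MeasurableSpace E] [BorelSpace E]
    {d r : ℝ} (hd : 0 ≤ d) (hr : r ≠ 0) (g : E → ℝ≥0∞) (S : Set E) :
    ∫⁻ ξ in r • S, g ξ ∂μH[d] = (‖r‖₊ : ℝ≥0∞) ^ d * ∫⁻ ξ in S, g (r • ξ) ∂μH[d] := by
  have hemb : MeasurableEmbedding fun ξ : E => r • ξ := measurableEmbedding_const_smul₀ hr
  have hmap : (μH[d] : Measure E) = ((‖r‖₊ : ℝ≥0∞) ^ d • μH[d]).map (r • ·) := by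
    ext T
    rw [hemb.map_apply, Measure.smul_apply, Set.preimage_smul₀ hr, smul_eq_mul]
    simpa [ENNReal.smul_def, ENNReal.coe_rpow_of_nonneg _ hd, smul_inv_smul₀ hr] using
      Measure.hausdorffMeasure_smul₀ hd hr (r⁻¹ • T)
  have hpre : (r • ·) ⁻¹' (r • S) = S := Set.preimage_image_eq S hemb.injective
  conv_lhs => rw [hmap]
  rw [hemb.restrict_map, hpre, hemb.lintegral_map, Measure.restrict_smul, lintegral_smul_measure,
    smul_eq_mul]

variable [InnerProductSpace ℝ E]

/-- `S` is the graph, over a subset of `W`, of a map into `Wᗮ`; the Lipschitz constant of this map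
is controlled by `K`, as the points of `S` are at distance at most `K` times the distance of their
projections to `W`. -/
def IsLipschitzGraph (W : Submodule ℝ E) [W.HasOrthogonalProjection] (K : ℝ≥0) (S : Set E) : Prop :=
  AntilipschitzWith K (S.domRestrict W.orthogonalProjectionOnto)

lemma IsLipschitzGraph.smul {W : Submodule ℝ E} [W.HasOrthogonalProjection] {K : ℝ≥0} {S : Set E}
    (hS : IsLipschitzGraph W K S) (r : ℝ) : IsLipschitzGraph W K (r • S) := by
  refine AntilipschitzWith.of_le_mul_dist ?_
  rintro ⟨_, ξ, hξ, rfl⟩ ⟨_, η, hη, rfl⟩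
  have hproj : dist ξ η ≤ K * dist (W.orthogonalProjectionOnto ξ) (W.orthogonalProjectionOnto η) :=
    hS.le_mul_dist ⟨ξ, hξ⟩ ⟨η, hη⟩
  simp only [Set.domRestrict_apply, Subtype.dist_eq, map_smul, dist_smul₀] at hproj ⊢
  rw [mul_left_comm]
  gcongr

lemma exists_norm_le_norm_orthogonalProjectionOnto_ker_add [FiniteDimensional ℝ E] {F : Type*}
    [NormedAddCommGroup F] [NormedSpace ℝ F] (L : E →L[ℝ] F) :
    ∃ M : ℝ, 0 < M ∧ ∀ x, ‖x‖ ≤ ‖L.ker.orthogonalProjectionOnto x‖ + M * ‖L x‖ := by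
  set W := L.ker
  have hinj : (L.toLinearMap.domRestrict Wᗮ).ker = ⊥ := by
    rw [LinearMap.ker_domRestrict, ← Submodule.disjoint_iff_comap_eq_bot]
    exact W.orthogonal_disjoint.symm
  obtain ⟨M, hM, hanti⟩ := LinearMap.exists_antilipschitzWith _ hinj
  refine ⟨M, hM, fun x => ?_⟩
  have hLx : L (Wᗮ.orthogonalProjectionOnto x) = L x := by
    have hker : L (W.orthogonalProjectionOnto x) = 0 := (W.orthogonalProjectionOnto x).2
    conv_rhs => rw [← W.starProjection_add_starProjection_orthogonal x, map_add]
    simp only [Submodule.starProjection_apply, hker, zero_add]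
  calc ‖x‖ = ‖W.starProjection x + Wᗮ.starProjection x‖ := by
        rw [W.starProjection_add_starProjection_orthogonal]
    _ ≤ ‖W.orthogonalProjectionOnto x‖ + ‖Wᗮ.orthogonalProjectionOnto x‖ := norm_add_le _ _
    _ ≤ ‖W.orthogonalProjectionOnto x‖ + M * ‖L x‖ := by
        gcongr
        rw [← hLx]
        exact hanti.le_mul_norm (map_zero _) _

lemma exists_nhds_isLipschitzGraph [FiniteDimensional ℝ E] {F : Type*} [NormedAddCommGroup F]
    [NormedSpace ℝ F] {g : E → F} {L : E →L[ℝ] F} {ξ₀ : E} (hg : HasStrictFDerivAt g L ξ₀) (c : F) :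
    ∃ U ∈ 𝓝 ξ₀, IsLipschitzGraph L.ker 2 (U ∩ g ⁻¹' {c}) := by
  obtain ⟨M, hM, hbound⟩ := exists_norm_le_norm_orthogonalProjectionOnto_ker_add L
  have hsmall := hg.isLittleO.def (c := (2 * M)⁻¹) (by positivity)
  rw [nhds_prod_eq, Filter.eventually_prod_self_iff'] at hsmall
  obtain ⟨U, hU, hsmall⟩ := hsmall
  refine ⟨U, hU, AntilipschitzWith.of_le_mul_dist ?_⟩
  rintro ⟨ξ, hξU, rfl⟩ ⟨η, hηU, hη⟩
  have hL : ‖L (ξ - η)‖ ≤ (2 * M)⁻¹ * ‖ξ - η‖ := by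
    have h : ‖g ξ - g η - L (ξ - η)‖ ≤ (2 * M)⁻¹ * ‖ξ - η‖ := hsmall ξ hξU η hηU
    rwa [show g η = g ξ from hη, sub_self, zero_sub, norm_neg] at h
  have habsorb : ‖ξ - η‖ ≤ ‖L.ker.orthogonalProjectionOnto (ξ - η)‖ + ‖ξ - η‖ / 2 :=
    calc ‖ξ - η‖ ≤ ‖L.ker.orthogonalProjectionOnto (ξ - η)‖ + M * ‖L (ξ - η)‖ := hbound _
      _ ≤ ‖L.ker.orthogonalProjectionOnto (ξ - η)‖ + M * ((2 * M)⁻¹ * ‖ξ - η‖) := by gcongr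
      _ = _ := by field_simp
  rw [Subtype.dist_eq, dist_eq_norm, dist_eq_norm, Set.domRestrict_apply, Set.domRestrict_apply,
    ← map_sub]
  push_cast
  linarith

end LipschitzGraphs

section UniformTrace

variable {E : Type*} [NormedAddCommGroup E] [InnerProductSpace ℝ E] [FiniteDimensional ℝ E]
  [MeasurableSpace E] [BorelSpace E]

/-- The square of the weighted norm `‖⟨x⟩ ^ s f‖` in `L²`, where `⟨x⟩ ^ 2 = 1 + ‖x‖ ^ 2`. -/
def weightedNormSq (s : ℝ) (f : E → ℂ) : ℝ≥0∞ :=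
  ∫⁻ x, ENNReal.ofReal ((1 + ‖x‖ ^ 2) ^ s) * ‖f x‖ₑ ^ 2

/-- The Fourier transform restricts to the dilates `τ • S` of the `d`-dimensional set `S`, as a
bounded map from the weighted space of order `s` to `L²`, with a bound uniform in the dilation. -/
def HasUniformTrace (d s : ℝ) (S : Set E) : Prop :=
  ∃ C : ℝ≥0, ∀ τ : ℝ, 0 < τ → ∀ f : 𝓢(E, ℂ),
    ∫⁻ ξ in τ • S, ‖𝓕 f ξ‖ₑ ^ 2 ∂μH[d] ≤ C * weightedNormSq s f

lemma lintegral_inv_rpow_one_add_norm_sq_ne_top {s : ℝ} (hs : finrank ℝ E < 2 * s) :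
    ∫⁻ x : E, (ENNReal.ofReal ((1 + ‖x‖ ^ 2) ^ s))⁻¹ ≠ ∞ := by
  have hint : Integrable (fun x : E => (1 + ‖x‖ ^ 2) ^ (-(2 * s) / 2)) :=
    integrable_rpow_neg_one_add_norm_sq hs
  convert! hint.lintegral_lt_top.ne using 3 with x
  rw [← ENNReal.ofReal_inv_of_pos (by positivity), ← Real.rpow_neg (by positivity)]
  ring_nf

lemma IsLipschitzGraph.hasUniformTrace {W : Submodule ℝ E} {K : ℝ≥0} {S : Set E}
    (hS : IsLipschitzGraph W K S) {s : ℝ} (hs : finrank ℝ Wᗮ < 2 * s) :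
    HasUniformTrace (finrank ℝ W) s S := by
  obtain ⟨c, hc⟩ := exists_hausdorffMeasure_finrank_eq_smul_volume (E := W)
  set w : Wᗮ → ℝ≥0∞ := fun t => ENNReal.ofReal ((1 + ‖t‖ ^ 2) ^ s)
  set D : ℝ≥0∞ := (K : ℝ≥0∞) ^ (finrank ℝ W : ℝ) * c
  have hCD : (∫⁻ t, (w t)⁻¹) * D ≠ ∞ := by
    have := lintegral_inv_rpow_one_add_norm_sq_ne_top hs
    finiteness
  refine ⟨((∫⁻ t, (w t)⁻¹) * D).toNNReal, fun τ _ f => ?_⟩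
  have hmap : ((μH[finrank ℝ W] : Measure E).restrict (τ • S)).map W.orthogonalProjectionOnto ≤
      D • volume := by
    refine (map_restrict_hausdorffMeasure_le W.orthogonalProjectionOnto.continuous.measurable
      (hS.smul τ) (Nat.cast_nonneg _)).trans_eq ?_
    rw [hc, ← smul_smul]
    rfl
  have hs_nonneg : 0 ≤ s := by
    have : (0 : ℝ) ≤ finrank ℝ Wᗮ := Nat.cast_nonneg _
    linarith
  rw [ENNReal.coe_toNNReal hCD, mul_assoc]
  refine (lintegral_enorm_sq_fourier_le_of_map_le hmap (w := w) (by fun_prop)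
    (fun t => by simp only [w, ne_eq, ENNReal.ofReal_eq_zero, not_le]; positivity)
    (fun t => ENNReal.ofReal_ne_top) f).trans ?_
  simp only [w, weightedNormSq]
  gcongr with x
  exact Wᗮ.norm_orthogonalProjectionOnto_apply_le x

lemma HasUniformTrace.mono {d s : ℝ} {S T : Set E} (hST : S ⊆ T) (hT : HasUniformTrace d s T) :
    HasUniformTrace d s S := by
  obtain ⟨C, hC⟩ := hT
  exact ⟨C, fun τ hτ f => (lintegral_mono_set (Set.smul_set_mono hST)).trans (hC τ hτ f)⟩

lemma HasUniformTrace.union {d s : ℝ} {S T : Set E} (hS : HasUniformTrace d s S)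
    (hT : HasUniformTrace d s T) : HasUniformTrace d s (S ∪ T) := by
  obtain ⟨C, hC⟩ := hS
  obtain ⟨D, hD⟩ := hT
  refine ⟨C + D, fun τ hτ f => ?_⟩
  rw [Set.smul_set_union, ENNReal.coe_add, add_mul]
  exact (lintegral_union_le _ _ _).trans (add_le_add (hC τ hτ f) (hD τ hτ f))

lemma hasUniformTrace_of_isCompact {F : Type*} [NormedAddCommGroup F]
    [NormedSpace ℝ F] {g : E → F} {c : F} {S : Set E} (hS : IsCompact S) (hSc : S ⊆ g ⁻¹' {c})
    {d : ℕ} (hg : ∀ ξ ∈ S, ∃ L : E →L[ℝ] F, HasStrictFDerivAt g L ξ ∧ finrank ℝ L.ker = d) {s : ℝ}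
    (hs : finrank ℝ E < d + 2 * s) : HasUniformTrace d s S := by
  refine hS.induction_on ⟨0, by simp⟩ (fun _ _ => HasUniformTrace.mono)
    (fun _ _ => HasUniformTrace.union) fun ξ hξ => ?_
  obtain ⟨L, hL, rfl⟩ := hg ξ hξ
  obtain ⟨U, hU, hgraph⟩ := exists_nhds_isLipschitzGraph hL c
  refine ⟨S ∩ U, inter_mem_nhdsWithin S hU, ?_⟩
  have hdim : (finrank ℝ L.ker : ℝ) + finrank ℝ L.kerᗮ = finrank ℝ E := by
    exact_mod_cast L.ker.finrank_add_finrank_orthogonal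
  have hsub : S ∩ U ⊆ U ∩ g ⁻¹' {c} := fun η hη => ⟨hη.2, hSc hη.1⟩
  exact (hgraph.hasUniformTrace (by linarith)).mono hsub

end UniformTrace

section HomogeneousFunctions

/-- Positive homogeneity of degree one, the property of the symbol `a` that makes its level sets
dilates of each other; no condition is imposed on multiples by negative scalars. -/
def PosHomogeneous {E : Type*} [SMul ℝ E] (a : E → ℝ) : Prop :=
  ∀ t : ℝ, 0 < t → ∀ ξ, a (t • ξ) = t * a ξ

namespace PosHomogeneous

section Module

variable {E : Type*} [AddCommGroup E] [Module ℝ E] {a : E → ℝ}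

lemma apply_zero (ha : PosHomogeneous a) : a 0 = 0 := by
  have h := ha 2 two_pos 0
  rw [smul_zero] at h
  linarith

lemma ne_zero_of_apply_eq_one (ha : PosHomogeneous a) {ξ : E} (hξ : a ξ = 1) : ξ ≠ 0 := by
  rintro rfl
  exact zero_ne_one (ha.apply_zero.symm.trans hξ)

lemma setOf_eq_eq_smul (ha : PosHomogeneous a) {τ : ℝ} (hτ : 0 < τ) :
    {ξ | a ξ = τ} = τ • {ξ | a ξ = 1} := by
  ext ξ
  rw [Set.mem_smul_set_iff_inv_smul_mem₀ hτ.ne', Set.mem_ofPred_eq, Set.mem_ofPred_eq,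
    ha _ (inv_pos.2 hτ), inv_mul_eq_one₀ hτ.ne', eq_comm]

end Module

variable {E : Type*} [NormedAddCommGroup E] [NormedSpace ℝ E] {a : E → ℝ}

lemma isCompact_setOf_eq_one [FiniteDimensional ℝ E] (ha : PosHomogeneous a)
    (hcont : ContinuousOn a {0}ᶜ) (hpos : ∀ ξ, ξ ≠ 0 → 0 < a ξ) : IsCompact {ξ | a ξ = 1} := by
  have : ProperSpace E := FiniteDimensional.proper ℝ E
  have hne (ξ : E) (hξ : ξ ∈ Metric.sphere 0 1) : ξ ≠ 0 := ne_zero_of_mem_unit_sphere ⟨ξ, hξ⟩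
  have hradial : ContinuousOn (fun ξ => (a ξ)⁻¹ • ξ) (Metric.sphere 0 1) :=
    ((hcont.mono hne).inv₀ fun ξ hξ => (hpos ξ (hne ξ hξ)).ne').smul continuousOn_id
  convert! (isCompact_sphere (0 : E) 1).image_of_continuousOn hradial using 1
  refine Set.Subset.antisymm (fun ξ hξ => ?_) ?_
  · have hnorm : 0 < ‖ξ‖ := norm_pos_iff.2 (ha.ne_zero_of_apply_eq_one hξ)
    refine ⟨‖ξ‖⁻¹ • ξ, by simp [norm_smul, hnorm.ne'], ?_⟩
    simp [ha _ (inv_pos.2 hnorm), show a ξ = 1 from hξ, smul_smul, hnorm.ne']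
  · rintro _ ⟨ξ, hξ, rfl⟩
    have hξ_pos := hpos ξ (hne ξ hξ)
    exact (ha _ (inv_pos.2 hξ_pos) ξ).trans (inv_mul_cancel₀ hξ_pos.ne')

lemma apply_self_eq_of_hasFDerivAt (ha : PosHomogeneous a) {L : E →L[ℝ] ℝ} {ξ : E}
    (hL : HasFDerivAt a L ξ) : L ξ = a ξ := by
  have hline : HasDerivAt (fun t : ℝ => t • ξ) ξ 1 := by
    simpa using (hasDerivAt_id (1 : ℝ)).smul_const ξ
  have hchain : HasDerivAt (fun t : ℝ => a (t • ξ)) (L ξ) 1 :=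
    HasFDerivAt.comp_hasDerivAt (1 : ℝ) (by rwa [one_smul]) hline
  refine hchain.unique <| (hasDerivAt_mul_const (a ξ)).congr_of_eventuallyEq ?_
  filter_upwards [lt_mem_nhds one_pos] with t ht using ha t ht ξ

end PosHomogeneous

end HomogeneousFunctions

lemma PosHomogeneous.hasUniformTrace {E : Type*} [NormedAddCommGroup E] [InnerProductSpace ℝ E]
    [FiniteDimensional ℝ E] [Nontrivial E] [MeasurableSpace E] [BorelSpace E] {a : E → ℝ}
    (ha : PosHomogeneous a) (hsmooth : ContDiffOn ℝ 1 a {0}ᶜ) (hpos : ∀ ξ, ξ ≠ 0 → 0 < a ξ) {s : ℝ}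
    (hs : 1 / 2 < s) : HasUniformTrace (finrank ℝ E - 1) s {ξ | a ξ = 1} := by
  have hderiv (ξ : E) (hξ : a ξ = 1) :
      ∃ L : E →L[ℝ] ℝ, HasStrictFDerivAt a L ξ ∧ finrank ℝ L.ker = finrank ℝ E - 1 := by
    have hstrict := (hsmooth.contDiffAt (isOpen_compl_singleton.mem_nhds
      (ha.ne_zero_of_apply_eq_one hξ))).hasStrictFDerivAt one_ne_zero
    have hne : (fderiv ℝ a ξ : Module.Dual ℝ E) ≠ 0 := fun h => by
      have heuler := ha.apply_self_eq_of_hasFDerivAt hstrict.hasFDerivAt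
      exact zero_ne_one (((LinearMap.congr_fun h ξ).symm.trans heuler).trans hξ)
    exact ⟨_, hstrict, Nat.eq_sub_of_add_eq (Module.Dual.finrank_ker_add_one_of_ne_zero hne)⟩
  have hdim : ((finrank ℝ E - 1 : ℕ) : ℝ) = finrank ℝ E - 1 := by
    rw [Nat.cast_sub Module.finrank_pos, Nat.cast_one]
  rw [← hdim]
  exact hasUniformTrace_of_isCompact (ha.isCompact_setOf_eq_one hsmooth.continuousOn hpos)
    subset_rfl hderiv (by linarith)

section NormalizedFourierTransform

lemma FT_eq_fourier (n : ℕ) (f : EuclideanSpace ℝ (Fin n) → ℂ) (ξ : EuclideanSpace ℝ (Fin n)) :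
    FT n f ξ = ((2 * π) ^ (-(n : ℝ) / 2) : ℝ) • 𝓕 f ((2 * π)⁻¹ • ξ) := by
  have hpi : (π : ℂ) ≠ 0 := by exact_mod_cast Real.pi_ne_zero
  rw [FT, Real.fourier_eq']
  congr with x
  rw [inner_smul_right, smul_eq_mul]
  congr 2
  push_cast
  field_simp

lemma eLpNorm_two_sq {α E : Type*} [MeasurableSpace α] [NormedAddCommGroup E] (f : α → E)
    (μ : Measure α) : eLpNorm f 2 μ ^ 2 = ∫⁻ x, ‖f x‖ₑ ^ 2 ∂μ := by
  simpa using eLpNorm_nnreal_pow_eq_lintegral (f := f) (μ := μ) (p := 2) two_ne_zero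

lemma eLpNorm_sqrt_rpow_mul_sq {E : Type*} [NormedAddCommGroup E] [InnerProductSpace ℝ E]
    [FiniteDimensional ℝ E] [MeasurableSpace E] [BorelSpace E] (s : ℝ) (f : E → ℂ) :
    eLpNorm (fun x => ((√(1 + ‖x‖ ^ 2) ^ s : ℝ) : ℂ) * f x) 2 volume ^ 2 = weightedNormSq s f := by
  rw [eLpNorm_two_sq]
  refine lintegral_congr fun x => ?_
  rw [enorm_mul, mul_pow, ← ofReal_norm (_ : ℂ), Complex.norm_real,
    Real.norm_of_nonneg (by positivity), ← ENNReal.ofReal_pow (by positivity),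
    Real.rpow_pow_comm (by positivity), Real.sq_sqrt (by positivity)]

lemma HasUniformTrace.exists_eLpNorm_FT_le {n : ℕ} {d s : ℝ} {S : Set (EuclideanSpace ℝ (Fin n))}
    (hd : 0 ≤ d) (hS : HasUniformTrace d s S) :
    ∃ C > 0, ∀ τ : ℝ, 0 < τ → ∀ f : 𝓢(EuclideanSpace ℝ (Fin n), ℂ),
      eLpNorm (FT n f) 2 (μH[d].restrict (τ • S)) ≤ ENNReal.ofReal C *
        eLpNorm (fun x => ((√(1 + ‖x‖ ^ 2) ^ s : ℝ) : ℂ) * f x) 2 volume := by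
  obtain ⟨C, hC⟩ := hS
  set c : ℝ := (2 * π) ^ (-(n : ℝ) / 2)
  set D : ℝ≥0 := ‖c‖₊ ^ 2 * (‖2 * π‖₊ ^ d * C)
  have h2pi : (2 * π : ℝ) ≠ 0 := by positivity
  refine ⟨√D + 1, by positivity, fun τ hτ f => ?_⟩
  have hsq : eLpNorm (FT n f) 2 (μH[d].restrict (τ • S)) ^ 2 ≤ D * weightedNormSq s f := by
    have hτS : τ • S = (2 * π) • ((2 * π)⁻¹ * τ) • S := by
      rw [smul_smul, mul_inv_cancel_left₀ h2pi]
    calc eLpNorm (FT n f) 2 (μH[d].restrict (τ • S)) ^ 2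
        = ‖c‖ₑ ^ 2 * ∫⁻ ξ in τ • S, ‖𝓕 f ((2 * π)⁻¹ • ξ)‖ₑ ^ 2 ∂μH[d] := by
          simp only [eLpNorm_two_sq, FT_eq_fourier, enorm_smul, mul_pow, SchwartzMap.fourier_coe]
          exact lintegral_const_mul' _ _ (by finiteness)
      _ = ‖c‖ₑ ^ 2 * (‖2 * π‖₊ ^ d * ∫⁻ ξ in ((2 * π)⁻¹ * τ) • S, ‖𝓕 f ξ‖ₑ ^ 2 ∂μH[d]) := by
          rw [hτS, setLIntegral_smul_hausdorffMeasure hd h2pi]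
          simp only [inv_smul_smul₀ h2pi]
      _ ≤ ‖c‖ₑ ^ 2 * (‖2 * π‖₊ ^ d * (C * weightedNormSq s f)) := by
          gcongr
          exact hC _ (by positivity) f
      _ = D * weightedNormSq s f := by
          simp only [D, ENNReal.coe_mul, ENNReal.coe_pow, ENNReal.coe_rpow_of_nonneg _ hd, enorm]
          ring
  refine (ENNReal.pow_le_pow_left_iff two_ne_zero).1 (hsq.trans ?_)
  rw [mul_pow, eLpNorm_sqrt_rpow_mul_sq]
  gcongr
  rw [← ENNReal.ofReal_pow (by positivity), ← ENNReal.ofReal_coe_nnreal]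
  gcongr
  nlinarith [Real.sq_sqrt D.coe_nonneg, Real.sqrt_nonneg D]

end NormalizedFourierTransform

theorem uniform_trace_estimate_general (n : ℕ) (hn : 0 < n) (θ : ℝ) (hθ : 0 < θ)
    (a : EuclideanSpace ℝ (Fin n) → ℝ) (ha_smooth : ContDiffOn ℝ 1 a {0}ᶜ)
    (ha_hom : ∀ t : ℝ, 0 < t → ∀ ξ, a (t • ξ) = t * a ξ)
    (ha_pos : ∀ ξ, ξ ≠ 0 → 0 < a ξ) :
    ∃ C > 0, ∀ τ : ℝ, 0 < τ → ∀ f : 𝓢(EuclideanSpace ℝ (Fin n), ℂ),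
      eLpNorm (FT n f) 2 (μH[(n : ℝ) - 1].restrict {ξ | a ξ = τ}) ≤ ENNReal.ofReal C *
        eLpNorm (fun x => ((√(1 + ‖x‖ ^ 2) ^ (1 / 2 + θ) : ℝ) : ℂ) * f x) 2 volume := by
  have : NeZero n := ⟨hn.ne'⟩
  have ha : PosHomogeneous a := ha_hom
  have htrace : HasUniformTrace (n - 1) (1 / 2 + θ) {ξ | a ξ = 1} := by
    simpa only [finrank_euclideanSpace_fin] using
      ha.hasUniformTrace ha_smooth ha_pos (lt_add_of_pos_right _ hθ)
  have hd : (0 : ℝ) ≤ n - 1 := sub_nonneg.2 (Nat.one_le_cast.2 hn)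
  obtain ⟨C, hC, hbound⟩ := htrace.exists_eLpNorm_FT_le hd
  exact ⟨C, hC, fun τ hτ f => ha.setOf_eq_eq_smul hτ ▸ hbound τ hτ f⟩

theorem uniform_trace_estimate (n : ℕ) (hn : 2 ≤ n) (θ : ℝ) (hθ : 0 < θ)
    (a : EuclideanSpace ℝ (Fin n) → ℝ)
    (ha_cont : Continuous a)
    (ha_smooth : ContDiffOn ℝ (⊤ : ℕ∞) a {(0 : EuclideanSpace ℝ (Fin n))}ᶜ)
    (ha_hom : ∀ t : ℝ, 0 < t → ∀ ξ, a (t • ξ) = t * a ξ)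
    (ha_pos : ∀ ξ : EuclideanSpace ℝ (Fin n), ξ ≠ 0 → 0 < a ξ) :
    ∃ C > 0, ∀ τ : ℝ, 0 < τ → ∀ f : SchwartzMap (EuclideanSpace ℝ (Fin n)) ℂ,
      eLpNorm (FT n (fun x => f x)) 2 (μH[(n : ℝ) - 1].restrict {ξ | a ξ = τ})
        ≤ ENNReal.ofReal C *
            eLpNorm (fun x => ((Real.sqrt (1 + ‖x‖ ^ 2) ^ (1 / 2 + θ) : ℝ) : ℂ) * f x) 2 volume := by
  exact uniform_trace_estimate_general n (by omega) θ hθ a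
    (ha_smooth.of_le (by exact_mod_cast le_top)) ha_hom ha_pos
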